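/- arXiv:2201.10232 — 4 statements merged into one kernel-verified Lean document; each statement's English description precedes it below -/
import Mathlib

section
/- Let M ∈ ℝ^{n×n}, N ∈ ℝ^{n×(S−n)}, let Q : ℝⁿ → ℝ^{S−n} be continuous with Q(0) = 0, and let P₁ ∈ ℝ^{n×n} be symmetric positive definite. Define f(x) := M x + N Q(x), V(x) := xᵀ P₁⁻¹ x, and h(x) := f(x)ᵀ P₁⁻¹ f(x) − xᵀ P₁⁻¹ x, and let 𝒱 := {x : h(x) < 0}. For γ > 0 let ℛ_γ := {x : V(x) ≤ γ}. If ℛ_γ ⊆ 𝒱 ∪ {0}, then ℛ_γ is positively invariant for x⁺ = f(x) (x(0) ∈ ℛ_γ implies x(t) ∈ ℛ_γ for all t ≥ 0), and every solution with x(0) ∈ ℛ_γ satisfies x(t) → 0 as t → ∞. (Proposition 1: data-based estimate of the region of attraction.) -/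
open Matrix Filter Topology

/-- A positive definite quadratic form on `Fin n → ℝ` dominates a multiple of the squared norm. -/
lemma Matrix.PosDef.exists_mul_sq_norm_le {n : ℕ} {A : Matrix (Fin n) (Fin n) ℝ} (hA : A.PosDef) :
    ∃ c > 0, ∀ x : Fin n → ℝ, c * ‖x‖ ^ 2 ≤ x ⬝ᵥ (A *ᵥ x) := by
  have hpos : ∀ x : Fin n → ℝ, x ≠ 0 → 0 < x ⬝ᵥ (A *ᵥ x) := fun x hx => by
    simpa using hA.dotProduct_mulVec_pos hx
  have hcont : Continuous fun x : Fin n → ℝ => x ⬝ᵥ (A *ᵥ x) := by fun_prop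
  obtain ⟨c, hc, hle⟩ := (isCompact_sphere (0 : Fin n → ℝ) 1).exists_forall_le'
    hcont.continuousOn (a := 0) fun x hx => hpos x (ne_zero_of_mem_unit_sphere ⟨x, hx⟩)
  refine ⟨c, hc, fun x => ?_⟩
  obtain rfl | hx := eq_or_ne x 0
  · simp
  have hx' : 0 < ‖x‖ := norm_pos_iff.mpr hx
  have key := hle (‖x‖⁻¹ • x) (by simp [norm_smul, hx'.ne'])
  simp only [mulVec_smul, dotProduct_smul, smul_dotProduct, smul_eq_mul] at key
  calc c * ‖x‖ ^ 2 ≤ (‖x‖⁻¹ * (‖x‖⁻¹ * (x ⬝ᵥ (A *ᵥ x)))) * ‖x‖ ^ 2 := by gcongr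
    _ = x ⬝ᵥ (A *ᵥ x) := by field_simp

/-- Sublevel sets of a positive definite quadratic form are compact. -/
lemma Matrix.PosDef.isCompact_sublevel {n : ℕ} {A : Matrix (Fin n) (Fin n) ℝ} (hA : A.PosDef)
    (γ : ℝ) : IsCompact {x : Fin n → ℝ | x ⬝ᵥ (A *ᵥ x) ≤ γ} := by
  obtain ⟨c, hc, hle⟩ := hA.exists_mul_sq_norm_le
  refine Metric.isCompact_of_isClosed_isBounded
    (isClosed_le (by fun_prop) continuous_const)
    (isBounded_iff_forall_norm_le.mpr ⟨√(γ / c), fun x hx => Real.le_sqrt_of_sq_le ?_⟩)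
  rw [le_div_iff₀' hc]
  exact (hle x).trans hx

/-- If a continuous function `V`, bounded below, decreases strictly along `f` on a compact sublevel
set except at a point `z`, and does not increase at `z`, then that set is positively invariant and
its orbits converge to `z`. -/
lemma tendsto_of_strict_lyapunov {X : Type*} [TopologicalSpace X] {f : X → X} (hf : Continuous f)
    {V : X → ℝ} (hV : Continuous V) (hbdd : BddBelow (Set.range V)) {γ : ℝ}
    (hcpt : IsCompact {x | V x ≤ γ}) {z : X} (hz : V (f z) ≤ V z)
    (hdec : ∀ x, V x ≤ γ → V (f x) < V x ∨ x = z)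
    {x : ℕ → X} (hx : ∀ t, x (t + 1) = f (x t)) (hx0 : V (x 0) ≤ γ) :
    (∀ t, V (x t) ≤ γ) ∧ Tendsto x atTop (𝓝 z) := by
  have hle : ∀ y, V y ≤ γ → V (f y) ≤ V y := fun y hy => by
    obtain h | rfl := hdec y hy
    exacts [h.le, hz]
  have hinv : ∀ t, V (x t) ≤ γ := fun t => by
    induction t with
    | zero => exact hx0
    | succ t ih => exact hx t ▸ (hle _ ih).trans ih
  refine ⟨hinv, ?_⟩
  have hanti : Antitone fun t => V (x t) :=
    antitone_nat_of_succ_le fun t => hx t ▸ hle _ (hinv t)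
  have hlim := tendsto_atTop_ciInf hanti (hbdd.mono (Set.range_comp_subset_range x V))
  have hlim' := hlim.comp (tendsto_add_atTop_nat 1)
  refine hcpt.le_nhds_of_unique_clusterPt (mem_map.mpr (univ_mem' hinv)) fun y hy hclus => ?_
  have hVy : V y = ⨅ t, V (x t) := by
    have hc : MapClusterPt (V y) atTop (V ∘ x) :=
      MapClusterPt.continuousAt_comp hV.continuousAt hclus
    exact eq_of_nhds_neBot (hc.neBot.mono (inf_le_inf_left _ hlim))
  have hVfy : V (f y) = ⨅ t, V (x t) := by
    have hc : MapClusterPt (V (f y)) atTop ((V ∘ f) ∘ x) :=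
      MapClusterPt.continuousAt_comp (f := V ∘ f) (hV.comp hf).continuousAt hclus
    have heq : (V ∘ f) ∘ x = (fun t => V (x t)) ∘ fun t => t + 1 := funext fun t => by simp [hx]
    rw [heq] at hc
    exact eq_of_nhds_neBot (hc.neBot.mono (inf_le_inf_left _ hlim'))
  exact (hdec y hy).resolve_left (hVfy.trans hVy.symm).not_lt

/-- Proposition 1 (data-based estimate of the region of attraction). -/
theorem region_of_attraction_estimate
    {n p : ℕ}
    (M : Matrix (Fin n) (Fin n) ℝ) (N : Matrix (Fin n) (Fin p) ℝ)
    (Q : (Fin n → ℝ) → Fin p → ℝ) (hQcont : Continuous Q) (hQ0 : Q 0 = 0)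
    (P₁ : Matrix (Fin n) (Fin n) ℝ) (hP₁symm : P₁.IsSymm) (hP₁ : P₁.PosDef)
    (f : (Fin n → ℝ) → Fin n → ℝ)
    (hf : ∀ x, f x = M *ᵥ x + N *ᵥ Q x)
    (V : (Fin n → ℝ) → ℝ) (hV : ∀ x, V x = x ⬝ᵥ (P₁⁻¹ *ᵥ x))
    (h : (Fin n → ℝ) → ℝ)
    (hh : ∀ x, h x = f x ⬝ᵥ (P₁⁻¹ *ᵥ f x) - x ⬝ᵥ (P₁⁻¹ *ᵥ x))
    (γ : ℝ) (hγ : 0 < γ)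
    -- ℛ_γ ⊆ 𝒱 ∪ {0}
    (hsub : ∀ x, V x ≤ γ → h x < 0 ∨ x = 0) :
    ∀ x : ℕ → Fin n → ℝ, (∀ t, x (t + 1) = f (x t)) → V (x 0) ≤ γ →
      (∀ t, V (x t) ≤ γ) ∧ Filter.Tendsto x Filter.atTop (nhds 0) := by
  intro x hx hx0
  have hA : P₁⁻¹.PosDef := hP₁.inv
  obtain rfl : V = fun x => x ⬝ᵥ (P₁⁻¹ *ᵥ x) := funext hV
  have hfcont : Continuous f := by
    rw [funext hf]
    fun_prop
  have hf0 : f 0 = 0 := by simp [hf, hQ0]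
  refine tendsto_of_strict_lyapunov hfcont (by fun_prop) ⟨0, ?_⟩ (hA.isCompact_sublevel γ)
    (by simp [hf0]) (fun y hy => ?_) hx hx0
  · rintro _ ⟨y, rfl⟩
    simpa using hA.posSemidef.dotProduct_mulVec_nonneg y
  · simpa [hh] using hsub y hy
end

section
/- Suppose P₁ ∈ ℝ^{n×n} is symmetric positive definite and Y₁ ∈ ℝ^{T×n} satisfies Z₀ Y₁ = [P₁; 0_{(S−n)×n}] and X₁ Y₁ + (X₁ Y₁)ᵀ ≺ 0. Then the matrix M := X₁ Y₁ P₁⁻¹ satisfies P₁⁻¹ M + Mᵀ P₁⁻¹ ≺ 0, and hence M is Hurwitz, i.e. every complex eigenvalue of M has strictly negative real part. (Continuous-time version of the stability condition, Section V-A.) -/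
open Matrix Filter Topology

def IsHurwitz {ι : Type*} [Fintype ι] [DecidableEq ι] (M : Matrix ι ι ℝ) : Prop :=
  ∀ μ ∈ spectrum ℂ (M.map (algebraMap ℝ ℂ)), μ.re < 0

def NegDef {ι : Type*} [Fintype ι] (M : Matrix ι ι ℝ) : Prop :=
  (-M).PosDef

open ComplexOrder MatrixOrder in
/-- A real positive definite matrix stays positive definite over `ℂ`. -/
theorem Matrix.PosDef.map_algebraMap_complex {ι : Type*} [Fintype ι] [DecidableEq ι]
    {A : Matrix ι ι ℝ} (hA : A.PosDef) : (A.map (algebraMap ℝ ℂ)).PosDef := by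
  obtain ⟨B, rfl⟩ := CStarAlgebra.nonneg_iff_eq_star_mul_self.mp hA.posSemidef.nonneg
  have hB : IsUnit (B.map (algebraMap ℝ ℂ)) :=
    (isUnit_of_mul_isUnit_right hA.isUnit).map (algebraMap ℝ ℂ).mapMatrix
  have hmap : (star B * B).map (algebraMap ℝ ℂ) =
      (B.map (algebraMap ℝ ℂ))ᴴ * B.map (algebraMap ℝ ℂ) := by
    rw [Matrix.map_mul, star_eq_conjTranspose, conjTranspose_map]
    intro x
    simp
  rw [hmap]
  exact PosDef.conjTranspose_mul_self _ (mulVec_injective_of_isUnit hB)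

open ComplexOrder in
/-- Lyapunov's criterion over `ℂ`. -/
theorem Matrix.PosDef.re_lt_zero_of_mem_spectrum {ι : Type*} [Fintype ι] [DecidableEq ι]
    {Q M : Matrix ι ι ℂ} (hQ : Q.PosDef) (hM : (-(Q * M + Mᴴ * Q)).PosDef)
    {μ : ℂ} (hμ : μ ∈ spectrum ℂ M) : μ.re < 0 := by
  rw [← spectrum_toLin', ← Module.End.hasEigenvalue_iff_mem_spectrum] at hμ
  obtain ⟨v, hv⟩ := hμ.exists_hasEigenvector
  have hMv : M *ᵥ v = μ • v := by simpa using hv.apply_eq_smul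
  have hquad : star v ⬝ᵥ (-(Q * M + Mᴴ * Q)) *ᵥ v = -(2 * μ.re : ℝ) * (star v ⬝ᵥ Q *ᵥ v) := by
    have hleft : star v ⬝ᵥ (Q * M) *ᵥ v = μ * (star v ⬝ᵥ Q *ᵥ v) := by
      rw [← mulVec_mulVec, hMv, mulVec_smul, dotProduct_smul, smul_eq_mul]
    have hright : star v ⬝ᵥ (Mᴴ * Q) *ᵥ v = star μ * (star v ⬝ᵥ Q *ᵥ v) := by
      rw [← mulVec_mulVec, dotProduct_mulVec, ← star_mulVec, hMv, star_smul, smul_dotProduct,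
        smul_eq_mul]
    rw [neg_mulVec, dotProduct_neg, add_mulVec, dotProduct_add, hleft, hright, ← add_mul,
      ← starRingEnd_apply, Complex.add_conj, neg_mul]
  have hpos := hM.dotProduct_mulVec_pos hv.2
  rw [hquad, ← Complex.ofReal_neg] at hpos
  have hre := (Complex.lt_def.mp hpos).1
  rw [Complex.re_ofReal_mul, Complex.zero_re] at hre
  have hQre := (Complex.lt_def.mp (hQ.dotProduct_mulVec_pos hv.2)).1
  rw [Complex.zero_re] at hQre
  linarith [pos_of_mul_pos_left hre hQre.le]

/-- Lyapunov's criterion for real matrices. -/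
theorem isHurwitz_of_negDef_lyapunov {ι : Type*} [Fintype ι] [DecidableEq ι]
    {Q M : Matrix ι ι ℝ} (hQ : Q.PosDef) (hM : NegDef (Q * M + Mᵀ * Q)) : IsHurwitz M := by
  intro μ hμ
  refine hQ.map_algebraMap_complex.re_lt_zero_of_mem_spectrum ?_ hμ
  have hmap : (-(Q * M + Mᵀ * Q)).map (algebraMap ℝ ℂ) =
      -(Q.map (algebraMap ℝ ℂ) * M.map (algebraMap ℝ ℂ) +
        (M.map (algebraMap ℝ ℂ))ᴴ * Q.map (algebraMap ℝ ℂ)) := by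
    have hstar : (M.map (algebraMap ℝ ℂ))ᴴ = Mᵀ.map (algebraMap ℝ ℂ) := by
      ext i j
      simp
    rw [hstar, ← Matrix.map_mul, ← Matrix.map_mul]
    ext i j
    simp
  rw [← hmap]
  exact PosDef.map_algebraMap_complex hM

/-- Continuous-time stability condition (Section V-A). -/
theorem continuous_time_stability_condition
    {n p T : ℕ}
    (Z₀ : Matrix (Fin n ⊕ Fin p) (Fin T) ℝ) (X₁ : Matrix (Fin n) (Fin T) ℝ)
    (P₁ : Matrix (Fin n) (Fin n) ℝ) (hP₁symm : P₁.IsSymm) (hP₁ : P₁.PosDef)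
    (Y₁ : Matrix (Fin T) (Fin n) ℝ)
    (h1 : Z₀ * Y₁ = Matrix.fromRows P₁ (0 : Matrix (Fin p) (Fin n) ℝ))
    (h2 : NegDef (X₁ * Y₁ + (X₁ * Y₁)ᵀ)) :
    NegDef (P₁⁻¹ * (X₁ * Y₁ * P₁⁻¹) + (X₁ * Y₁ * P₁⁻¹)ᵀ * P₁⁻¹) ∧
    IsHurwitz (X₁ * Y₁ * P₁⁻¹) := by
  have hLyapunov : NegDef (P₁⁻¹ * (X₁ * Y₁ * P₁⁻¹) + (X₁ * Y₁ * P₁⁻¹)ᵀ * P₁⁻¹) := by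
    have hconj : -(P₁⁻¹ * (X₁ * Y₁ * P₁⁻¹) + (X₁ * Y₁ * P₁⁻¹)ᵀ * P₁⁻¹) =
        P₁⁻¹ᴴ * -(X₁ * Y₁ + (X₁ * Y₁)ᵀ) * P₁⁻¹ := by
      rw [hP₁.inv.isHermitian.eq, transpose_mul _ P₁⁻¹, transpose_nonsing_inv, hP₁symm.eq]
      noncomm_ring
    rw [NegDef, hconj]
    exact PosDef.conjTranspose_mul_mul_same h2 (mulVec_injective_of_isUnit hP₁.inv.isUnit)
  exact ⟨hLyapunov, isHurwitz_of_negDef_lyapunov hP₁.inv hLyapunov⟩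
end

section
/- Let P₁ ∈ ℝ^{n×n} be symmetric positive definite, Ω ∈ ℝ^{n×n} symmetric positive definite, Y₁ ∈ ℝ^{T×n}, G₂ ∈ ℝ^{T×(S−n)}, and set G₁ := Y₁ P₁⁻¹, Ψ := (X₁ − E D₀) G₁, Ξ := (X₁ − E D₀) G₂. Assume ‖D₀‖₂ ≤ ‖Δ‖₂ and that Y₁ᵀ (X₁ − E D₀)ᵀ P₁⁻¹ (X₁ − E D₀) Y₁ − P₁ + Ω ≺ 0. Then for V(x) := xᵀ P₁⁻¹ x and every x ∈ ℝⁿ, the Lyapunov decrement along x⁺ = Ψ x + Ξ Q(x) satisfies V(Ψx + ΞQ(x)) − V(x) ≤ ℓ(x), where ℓ(x) := −xᵀ P₁⁻¹ Ω P₁⁻¹ x + ℓ₁(x) + ℓ₂(x) + ℓ₃(x) + ℓ₄(x) and ℓ₁, ℓ₂, ℓ₃, ℓ₄ are the data-based quantities defined in the context. (Data-based upper bound on the Lyapunov decrement under noisy data, inequality (34).) -/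
open Matrix Filter Topology

noncomputable def euclNorm {ι : Type*} [Fintype ι] (v : ι → ℝ) : ℝ :=
  Real.sqrt (∑ i, v i ^ 2)

noncomputable def spec2Norm {ι κ : Type*} [Fintype ι] [Fintype κ]
    (M : Matrix ι κ ℝ) : ℝ :=
  sSup ((fun v => euclNorm (M *ᵥ v)) '' {v | euclNorm v ≤ 1})

/-- The data-based bound `ℓ(x)` of inequality (34):
`ℓ(x) = -xᵀP₁⁻¹ΩP₁⁻¹x + ℓ₁(x) + ℓ₂(x) + ℓ₃(x) + ℓ₄(x)`. -/
noncomputable def ellFun {n s s' p T : ℕ}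
    (X₁ : Matrix (Fin n) (Fin T) ℝ) (E : Matrix (Fin n) (Fin s) ℝ)
    (Δ : Matrix (Fin s) (Fin s') ℝ) (P₁ Ω : Matrix (Fin n) (Fin n) ℝ)
    (G₁ : Matrix (Fin T) (Fin n) ℝ) (G₂ : Matrix (Fin T) (Fin p) ℝ)
    (Q : (Fin n → ℝ) → Fin p → ℝ) (x : Fin n → ℝ) : ℝ :=
  - (x ⬝ᵥ ((P₁⁻¹ * Ω * P₁⁻¹) *ᵥ x))
  + (((2:ℝ) • ((X₁ * G₁) *ᵥ x) + (X₁ * G₂) *ᵥ Q x) ⬝ᵥ (P₁⁻¹ *ᵥ ((X₁ * G₂) *ᵥ Q x)))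
  + spec2Norm Δ
      * euclNorm (((2:ℝ) • ((X₁ * G₁) *ᵥ x) + (X₁ * G₂) *ᵥ Q x) ᵥ* (P₁⁻¹ * E))
      * euclNorm (G₂ *ᵥ Q x)
  + spec2Norm Δ * euclNorm ((2:ℝ) • (G₁ *ᵥ x) + G₂ *ᵥ Q x)
      * euclNorm ((Eᵀ * P₁⁻¹ * X₁ * G₂) *ᵥ Q x)
  + spec2Norm Δ ^ 2 * spec2Norm (Eᵀ * P₁⁻¹ * E)
      * euclNorm ((2:ℝ) • (G₁ *ᵥ x) + G₂ *ᵥ Q x) * euclNorm (G₂ *ᵥ Q x)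

theorem euclNorm_nonneg {ι : Type*} [Fintype ι] (v : ι → ℝ) : 0 ≤ euclNorm v :=
  Real.sqrt_nonneg _

theorem euclNorm_eq_norm_toLp {ι : Type*} [Fintype ι] (v : ι → ℝ) :
    euclNorm v = ‖WithLp.toLp 2 v‖ := by
  simp [euclNorm, EuclideanSpace.norm_eq]

theorem euclNorm_smul {ι : Type*} [Fintype ι] (c : ℝ) (v : ι → ℝ) :
    euclNorm (c • v) = |c| * euclNorm v := by
  rw [euclNorm_eq_norm_toLp, euclNorm_eq_norm_toLp, WithLp.toLp_smul, norm_smul, Real.norm_eq_abs]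

theorem euclNorm_eq_zero {ι : Type*} [Fintype ι] {v : ι → ℝ} : euclNorm v = 0 ↔ v = 0 := by
  rw [euclNorm_eq_norm_toLp, norm_eq_zero, WithLp.toLp_eq_zero]

theorem abs_dotProduct_le_euclNorm_mul {ι : Type*} [Fintype ι] (v w : ι → ℝ) :
    |v ⬝ᵥ w| ≤ euclNorm v * euclNorm w := by
  have h := abs_real_inner_le_norm (WithLp.toLp 2 w) (WithLp.toLp 2 v)
  rw [EuclideanSpace.inner_toLp_toLp, star_trivial, ← euclNorm_eq_norm_toLp,
    ← euclNorm_eq_norm_toLp] at h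
  rwa [mul_comm]

theorem bddAbove_euclNorm_mulVec {ι κ : Type*} [Fintype ι] [Fintype κ] (M : Matrix ι κ ℝ) :
    BddAbove ((fun v => euclNorm (M *ᵥ v)) '' {v | euclNorm v ≤ 1}) := by
  classical
  refine ⟨‖(Matrix.toEuclideanLin M).toContinuousLinearMap‖, ?_⟩
  rintro _ ⟨v, hv, rfl⟩
  have h := (Matrix.toEuclideanLin M).toContinuousLinearMap.le_opNorm (WithLp.toLp 2 v)
  rw [LinearMap.coe_toContinuousLinearMap', Matrix.toLpLin_toLp, ← euclNorm_eq_norm_toLp,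
    ← euclNorm_eq_norm_toLp] at h
  exact h.trans (mul_le_of_le_one_right (norm_nonneg _) hv)

theorem spec2Norm_nonneg {ι κ : Type*} [Fintype ι] [Fintype κ] (M : Matrix ι κ ℝ) :
    0 ≤ spec2Norm M := by
  refine Real.sSup_nonneg ?_
  rintro _ ⟨v, -, rfl⟩
  exact euclNorm_nonneg _

theorem euclNorm_mulVec_le {ι κ : Type*} [Fintype ι] [Fintype κ] (M : Matrix ι κ ℝ) (v : κ → ℝ) :
    euclNorm (M *ᵥ v) ≤ spec2Norm M * euclNorm v := by
  rcases (euclNorm_nonneg v).eq_or_lt with h0 | hpos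
  · have hv : v = 0 := euclNorm_eq_zero.mp h0.symm
    have hz : euclNorm (M *ᵥ v) = 0 := euclNorm_eq_zero.mpr (by rw [hv, mulVec_zero])
    rw [hz, ← h0, mul_zero]
  · have hunit : euclNorm ((euclNorm v)⁻¹ • v) ≤ 1 := by
      rw [euclNorm_smul, abs_of_pos (inv_pos.mpr hpos), inv_mul_cancel₀ hpos.ne']
    have h := le_csSup (bddAbove_euclNorm_mulVec M) (Set.mem_image_of_mem _ hunit)
    rw [mulVec_smul, euclNorm_smul, abs_of_pos (inv_pos.mpr hpos), inv_mul_le_iff₀ hpos] at h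
    rwa [mul_comm]

/-- Robust bound on a perturbed bilinear form, with the perturbation entering as `E * D`. -/
theorem perturbed_bilin_le {n s T : ℕ} (X : Matrix (Fin n) (Fin T) ℝ)
    (E : Matrix (Fin n) (Fin s) ℝ) (D : Matrix (Fin s) (Fin T) ℝ)
    (N : Matrix (Fin n) (Fin n) ℝ) {δ : ℝ} (hD : spec2Norm D ≤ δ) (h q : Fin T → ℝ) :
    ((X - E * D) *ᵥ h) ⬝ᵥ (N *ᵥ ((X - E * D) *ᵥ q)) ≤
      (X *ᵥ h) ⬝ᵥ (N *ᵥ (X *ᵥ q))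
      + δ * euclNorm ((X *ᵥ h) ᵥ* (N * E)) * euclNorm q
      + δ * euclNorm h * euclNorm ((Eᵀ * N * X) *ᵥ q)
      + δ ^ 2 * spec2Norm (Eᵀ * N * E) * euclNorm h * euclNorm q := by
  have hδ : 0 ≤ δ := (spec2Norm_nonneg D).trans hD
  have hDv (v : Fin T → ℝ) : euclNorm (D *ᵥ v) ≤ δ * euclNorm v :=
    (euclNorm_mulVec_le D v).trans (mul_le_mul_of_nonneg_right hD (euclNorm_nonneg v))
  have expand : ((X - E * D) *ᵥ h) ⬝ᵥ (N *ᵥ ((X - E * D) *ᵥ q)) =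
      (X *ᵥ h) ⬝ᵥ (N *ᵥ (X *ᵥ q)) - ((X *ᵥ h) ᵥ* (N * E)) ⬝ᵥ (D *ᵥ q)
      - (D *ᵥ h) ⬝ᵥ ((Eᵀ * N * X) *ᵥ q) + (D *ᵥ h) ⬝ᵥ ((Eᵀ * N * E) *ᵥ (D *ᵥ q)) := by
    have transp (u : Fin s → ℝ) (w : Fin n → ℝ) : u ⬝ᵥ (Eᵀ *ᵥ w) = (E *ᵥ u) ⬝ᵥ w := by
      rw [dotProduct_mulVec, vecMul_transpose]
    simp only [sub_mulVec, ← mulVec_mulVec, mulVec_sub, sub_dotProduct, dotProduct_sub,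
      ← dotProduct_mulVec, transp]
    ring
  have cross₁ : -(((X *ᵥ h) ᵥ* (N * E)) ⬝ᵥ (D *ᵥ q)) ≤
      δ * euclNorm ((X *ᵥ h) ᵥ* (N * E)) * euclNorm q := by
    calc _ ≤ _ := (neg_le_abs _).trans (abs_dotProduct_le_euclNorm_mul _ _)
      _ ≤ euclNorm ((X *ᵥ h) ᵥ* (N * E)) * (δ * euclNorm q) :=
        mul_le_mul_of_nonneg_left (hDv q) (euclNorm_nonneg _)
      _ = _ := by ring
  have cross₂ : -((D *ᵥ h) ⬝ᵥ ((Eᵀ * N * X) *ᵥ q)) ≤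
      δ * euclNorm h * euclNorm ((Eᵀ * N * X) *ᵥ q) :=
    ((neg_le_abs _).trans (abs_dotProduct_le_euclNorm_mul _ _)).trans
      (mul_le_mul_of_nonneg_right (hDv h) (euclNorm_nonneg _))
  have quad : (D *ᵥ h) ⬝ᵥ ((Eᵀ * N * E) *ᵥ (D *ᵥ q)) ≤
      δ ^ 2 * spec2Norm (Eᵀ * N * E) * euclNorm h * euclNorm q := by
    calc _ ≤ _ := (le_abs_self _).trans (abs_dotProduct_le_euclNorm_mul _ _)
      _ ≤ (δ * euclNorm h) * (spec2Norm (Eᵀ * N * E) * (δ * euclNorm q)) :=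
        mul_le_mul (hDv h)
          ((euclNorm_mulVec_le _ _).trans
            (mul_le_mul_of_nonneg_left (hDv q) (spec2Norm_nonneg _)))
          (euclNorm_nonneg _) (mul_nonneg hδ (euclNorm_nonneg _))
      _ = _ := by ring
  linarith

/-- Data-based upper bound on the Lyapunov decrement under noisy data,
inequality (34). -/
theorem lyapunov_decrement_bound_noisy_data
    {n s s' p T : ℕ}
    (X₁ : Matrix (Fin n) (Fin T) ℝ) (E : Matrix (Fin n) (Fin s) ℝ)
    (D₀ : Matrix (Fin s) (Fin T) ℝ) (Δ : Matrix (Fin s) (Fin s') ℝ)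
    (Q : (Fin n → ℝ) → Fin p → ℝ)
    (P₁ : Matrix (Fin n) (Fin n) ℝ) (hP₁symm : P₁.IsSymm) (hP₁ : P₁.PosDef)
    (Ω : Matrix (Fin n) (Fin n) ℝ) (hΩsymm : Ω.IsSymm) (hΩ : Ω.PosDef)
    (Y₁ : Matrix (Fin T) (Fin n) ℝ) (G₂ : Matrix (Fin T) (Fin p) ℝ)
    (G₁ : Matrix (Fin T) (Fin n) ℝ) (hG₁ : G₁ = Y₁ * P₁⁻¹)
    (Ψ : Matrix (Fin n) (Fin n) ℝ) (hΨ : Ψ = (X₁ - E * D₀) * G₁)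
    (Ξ : Matrix (Fin n) (Fin p) ℝ) (hΞ : Ξ = (X₁ - E * D₀) * G₂)
    (hD₀norm : spec2Norm D₀ ≤ spec2Norm Δ)
    (hrob : NegDef (Y₁ᵀ * (X₁ - E * D₀)ᵀ * P₁⁻¹ * ((X₁ - E * D₀) * Y₁) - P₁ + Ω)) :
    ∀ x : Fin n → ℝ,
      (Ψ *ᵥ x + Ξ *ᵥ Q x) ⬝ᵥ (P₁⁻¹ *ᵥ (Ψ *ᵥ x + Ξ *ᵥ Q x)) - x ⬝ᵥ (P₁⁻¹ *ᵥ x)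
        ≤ ellFun X₁ E Δ P₁ Ω G₁ G₂ Q x := by
  intro x
  have hNsymm : (P₁⁻¹)ᵀ = P₁⁻¹ := by rw [transpose_nonsing_inv, hP₁symm.eq]
  have swap (u v : Fin n → ℝ) : u ⬝ᵥ (P₁⁻¹ *ᵥ v) = (P₁⁻¹ *ᵥ u) ⬝ᵥ v := by
    rw [dotProduct_mulVec, ← mulVec_transpose, hNsymm]
  have hPinv : P₁ *ᵥ (P₁⁻¹ *ᵥ x) = x := by
    rw [mulVec_mulVec, mul_nonsing_inv _ ((isUnit_iff_isUnit_det _).mp hP₁.isUnit), one_mulVec]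
  have nominal : (Ψ *ᵥ x) ⬝ᵥ (P₁⁻¹ *ᵥ (Ψ *ᵥ x)) - x ⬝ᵥ (P₁⁻¹ *ᵥ x) ≤
      -(x ⬝ᵥ ((P₁⁻¹ * Ω * P₁⁻¹) *ᵥ x)) := by
    have hquad := hrob.posSemidef.dotProduct_mulVec_nonneg (P₁⁻¹ *ᵥ x)
    have transpW (u : Fin T → ℝ) (w : Fin n → ℝ) :
        u ⬝ᵥ ((X₁ - E * D₀)ᵀ *ᵥ w) = ((X₁ - E * D₀) *ᵥ u) ⬝ᵥ w := by
      rw [dotProduct_mulVec, vecMul_transpose]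
    have transpY (u : Fin n → ℝ) (w : Fin T → ℝ) : u ⬝ᵥ (Y₁ᵀ *ᵥ w) = (Y₁ *ᵥ u) ⬝ᵥ w := by
      rw [dotProduct_mulVec, vecMul_transpose]
    rw [star_trivial, neg_mulVec, dotProduct_neg, add_mulVec, sub_mulVec, dotProduct_add,
      dotProduct_sub, hPinv] at hquad
    simp only [← mulVec_mulVec, transpY, transpW] at hquad
    rw [hΨ, hG₁]
    simp only [← mulVec_mulVec, swap x]
    linarith
  have hΨΞ : (2:ℝ) • (Ψ *ᵥ x) + Ξ *ᵥ Q x =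
      (X₁ - E * D₀) *ᵥ ((2:ℝ) • (G₁ *ᵥ x) + G₂ *ᵥ Q x) := by
    rw [hΨ, hΞ, mulVec_add, mulVec_smul, mulVec_mulVec, mulVec_mulVec]
  have split : (Ψ *ᵥ x + Ξ *ᵥ Q x) ⬝ᵥ (P₁⁻¹ *ᵥ (Ψ *ᵥ x + Ξ *ᵥ Q x)) =
      (Ψ *ᵥ x) ⬝ᵥ (P₁⁻¹ *ᵥ (Ψ *ᵥ x))
      + ((2:ℝ) • (Ψ *ᵥ x) + Ξ *ᵥ Q x) ⬝ᵥ (P₁⁻¹ *ᵥ (Ξ *ᵥ Q x)) := by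
    have hcomm : (Ξ *ᵥ Q x) ⬝ᵥ (P₁⁻¹ *ᵥ (Ψ *ᵥ x)) = (Ψ *ᵥ x) ⬝ᵥ (P₁⁻¹ *ᵥ (Ξ *ᵥ Q x)) := by
      rw [swap, dotProduct_comm]
    simp only [mulVec_add, add_dotProduct, dotProduct_add, smul_dotProduct, smul_eq_mul, hcomm]
    ring
  have hΞq : Ξ *ᵥ Q x = (X₁ - E * D₀) *ᵥ (G₂ *ᵥ Q x) := by rw [hΞ, mulVec_mulVec]
  have robust := perturbed_bilin_le X₁ E D₀ P₁⁻¹ hD₀norm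
    ((2:ℝ) • (G₁ *ᵥ x) + G₂ *ᵥ Q x) (G₂ *ᵥ Q x)
  rw [← hΨΞ, ← hΞq, mulVec_add X₁, mulVec_smul, mulVec_mulVec _ X₁, mulVec_mulVec _ X₁,
    mulVec_mulVec _ (Eᵀ * P₁⁻¹ * X₁)] at robust
  rw [split, ellFun]
  linarith
end

section
/- In the setting of Theorem 6 (so that V(x) = xᵀP₁⁻¹x satisfies V(Ψx + ΞQ(x)) − V(x) ≤ ℓ(x) for all x, with Ψ := (X₁ − E D₀)Y₁P₁⁻¹, Ξ := (X₁ − E D₀)G₂, Q continuous with Q(0) = 0), let ℒ := {x : ℓ(x) < 0} and for γ > 0 let ℛ_γ := {x : V(x) ≤ γ}. If ℛ_γ ⊆ ℒ ∪ {0}, then ℛ_γ is positively invariant for the unperturbed closed-loop system x⁺ = Ψ x + Ξ Q(x), and every solution starting in ℛ_γ converges to 0. (Proposition 2: region-of-attraction estimate from noisy data.) -/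
open Matrix Filter Topology

/-- Sublevel sets of a continuous positive definite function that is homogeneous of degree two
are compact. -/
theorem isCompact_sublevel_of_homogeneous {F : Type*} [NormedAddCommGroup F] [NormedSpace ℝ F]
    [ProperSpace F] {V : F → ℝ} (hcont : Continuous V)
    (hsmul : ∀ (a : ℝ) (x : F), V (a • x) = a ^ 2 * V x) (hpos : ∀ x, x ≠ 0 → 0 < V x) (γ : ℝ) :
    IsCompact {x | V x ≤ γ} := by
  obtain ⟨m, hm, hle⟩ : ∃ m : ℝ, 0 < m ∧ ∀ y ∈ Metric.sphere (0 : F) 1, m ≤ V y := by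
    rcases (Metric.sphere (0 : F) 1).eq_empty_or_nonempty with h | h
    · exact ⟨1, one_pos, by simp [h]⟩
    · obtain ⟨y, hy, hmin⟩ := (isCompact_sphere (0 : F) 1).exists_isMinOn h hcont.continuousOn
      exact ⟨V y, hpos y (ne_zero_of_mem_unit_sphere ⟨y, hy⟩), fun z hz => hmin hz⟩
  refine Metric.isCompact_of_isClosed_isBounded (isClosed_le hcont continuous_const) ?_
  refine (Metric.isBounded_closedBall (x := (0 : F)) (r := √(γ / m))).subset fun x hx => ?_
  rw [mem_closedBall_zero_iff]
  by_cases h0 : x = 0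
  · simp [h0]
  · refine Real.le_sqrt_of_sq_le ((le_div_iff₀ hm).2 ?_)
    have hnorm : ‖x‖ ≠ 0 := norm_ne_zero_iff.2 h0
    have hunit : m ≤ V (‖x‖⁻¹ • x) := hle _ (by simp [norm_smul, hnorm])
    calc ‖x‖ ^ 2 * m ≤ ‖x‖ ^ 2 * V (‖x‖⁻¹ • x) := by gcongr
      _ = V x := by rw [← hsmul, smul_inv_smul₀ hnorm]
      _ ≤ γ := hx

/-- A discrete-time Lyapunov argument on a compact sublevel set: if `V` strictly decreases along `f`
away from the fixed point `a`, then the sublevel set is invariant and trajectories in it converge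
to `a`. -/
theorem sublevel_invariant_and_tendsto_of_strict_decrease {F : Type*} [TopologicalSpace F]
    {f : F → F} {V : F → ℝ} {a : F} {γ : ℝ} (hf : Continuous f) (hV : Continuous V)
    (hfa : f a = a) (hmin : ∀ x, V a ≤ V x) (hcomp : IsCompact {x | V x ≤ γ})
    (hdecr : ∀ x, V x ≤ γ → x ≠ a → V (f x) < V x)
    {x : ℕ → F} (hx : ∀ t, x (t + 1) = f (x t)) (hx0 : V (x 0) ≤ γ) :
    (∀ t, V (x t) ≤ γ) ∧ Tendsto x atTop (𝓝 a) := by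
  have hstep : ∀ y, V y ≤ γ → V (f y) ≤ V y := fun y hy => by
    by_cases h : y = a
    · rw [h, hfa]
    · exact (hdecr y hy h).le
  have hinv : ∀ t, V (x t) ≤ γ := fun t => by
    induction t with
    | zero => exact hx0
    | succ t ih => exact hx t ▸ (hstep _ ih).trans ih
  have hanti : Antitone fun t => V (x t) :=
    antitone_nat_of_succ_le fun t => hx t ▸ hstep _ (hinv t)
  have hlim := tendsto_atTop_ciInf hanti ⟨V a, by rintro _ ⟨t, rfl⟩; exact hmin _⟩
  have hlim_succ : Tendsto (fun t => V (f (x t))) atTop (𝓝 (⨅ t, V (x t))) := by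
    simpa only [← hx, Function.comp_def] using hlim.comp (tendsto_add_atTop_nat 1)
  refine ⟨hinv, hcomp.tendsto_nhds_of_unique_mapClusterPt (.of_forall hinv) fun z hz hclus => ?_⟩
  have hVz := eq_of_nhds_neBot ((hclus.continuousAt_comp hV.continuousAt).clusterPt.mono hlim)
  have hVfz := eq_of_nhds_neBot
    ((hclus.continuousAt_comp (hV.comp hf).continuousAt).clusterPt.mono hlim_succ)
  by_contra hne
  exact (hdecr z hz hne).ne (hVfz.trans hVz.symm)

/-- Proposition 2 (region-of-attraction estimate from noisy data). -/
theorem region_of_attraction_estimate_noisy_data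
    {n s s' p T : ℕ}
    (X₁ : Matrix (Fin n) (Fin T) ℝ) (E : Matrix (Fin n) (Fin s) ℝ)
    (D₀ : Matrix (Fin s) (Fin T) ℝ) (Δ : Matrix (Fin s) (Fin s') ℝ)
    (Q : (Fin n → ℝ) → Fin p → ℝ) (hQcont : Continuous Q) (hQ0 : Q 0 = 0)
    (P₁ : Matrix (Fin n) (Fin n) ℝ) (hP₁symm : P₁.IsSymm) (hP₁ : P₁.PosDef)
    (Ω : Matrix (Fin n) (Fin n) ℝ) (hΩsymm : Ω.IsSymm) (hΩ : Ω.PosDef)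
    (Y₁ : Matrix (Fin T) (Fin n) ℝ) (G₂ : Matrix (Fin T) (Fin p) ℝ)
    (G₁ : Matrix (Fin T) (Fin n) ℝ) (hG₁ : G₁ = Y₁ * P₁⁻¹)
    (Ψ : Matrix (Fin n) (Fin n) ℝ) (hΨ : Ψ = (X₁ - E * D₀) * Y₁ * P₁⁻¹)
    (Ξ : Matrix (Fin n) (Fin p) ℝ) (hΞ : Ξ = (X₁ - E * D₀) * G₂)
    (hD₀norm : spec2Norm D₀ ≤ spec2Norm Δ)
    (hrob : NegDef (Y₁ᵀ * (X₁ - E * D₀)ᵀ * P₁⁻¹ * ((X₁ - E * D₀) * Y₁) - P₁ + Ω))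
    (V : (Fin n → ℝ) → ℝ) (hV : ∀ x, V x = x ⬝ᵥ (P₁⁻¹ *ᵥ x))
    -- the Lyapunov decrement bound from the setting of Theorem 6:
    (hdec : ∀ x : Fin n → ℝ,
      V (Ψ *ᵥ x + Ξ *ᵥ Q x) - V x ≤ ellFun X₁ E Δ P₁ Ω G₁ G₂ Q x)
    (γ : ℝ) (hγ : 0 < γ)
    -- ℛ_γ ⊆ ℒ ∪ {0}:
    (hsub : ∀ x, V x ≤ γ → ellFun X₁ E Δ P₁ Ω G₁ G₂ Q x < 0 ∨ x = 0) :
    ∀ x : ℕ → Fin n → ℝ,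
      (∀ t, x (t + 1) = Ψ *ᵥ x t + Ξ *ᵥ Q (x t)) → V (x 0) ≤ γ →
      (∀ t, V (x t) ≤ γ) ∧ Filter.Tendsto x Filter.atTop (nhds 0) := by
  intro x hx hx0
  have hPinv : P₁⁻¹.PosDef := hP₁.inv
  have hVcont : Continuous V := by
    rw [funext hV]
    fun_prop
  have hVpos : ∀ y, y ≠ 0 → 0 < V y := fun y hy => by
    simpa [hV] using hPinv.dotProduct_mulVec_pos hy
  have hV0 : V 0 = 0 := by simp [hV]
  have hVsmul : ∀ (a : ℝ) (y : Fin n → ℝ), V (a • y) = a ^ 2 * V y := fun a y => by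
    simp only [hV, mulVec_smul, smul_dotProduct, dotProduct_smul, smul_eq_mul]
    ring
  refine sublevel_invariant_and_tendsto_of_strict_decrease
    (f := fun y => Ψ *ᵥ y + Ξ *ᵥ Q y) (by fun_prop) hVcont (by simp [hQ0]) (fun y => ?_)
    (isCompact_sublevel_of_homogeneous hVcont hVsmul hVpos γ) (fun y hy hne => ?_) hx hx0
  · by_cases hy : y = 0
    · rw [hy]
    · exact hV0.trans_le (hVpos y hy).le
  · have hneg := (hsub y hy).resolve_right hne
    linarith [hdec y]
end
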